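/- Let X⁺ be an open dense subset of ℝ^n whose complement is the zero locus of a polynomial h ∈ ℝ[x_1,…,x_n]. Let T be a tempered distribution on ℝ^n of finite order that vanishes on all smooth compactly supported functions supported in X⁺. Then there exists M ∈ ℤ_{≥0} such that T(h^M ξ) = 0 for all Schwartz functions ξ. -/

import Mathlib

open MeasureTheory

/-- Partial derivative in the `i`-th coordinate direction. -/
noncomputable def dirD {n : ℕ} (i : Fin n) (g : EuclideanSpace ℝ (Fin n) → ℂ) :
    EuclideanSpace ℝ (Fin n) → ℂ :=
  fun x => fderiv ℝ g x (EuclideanSpace.single i 1)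

/-- The multi-index derivative `∂^α`. -/
noncomputable def mulDiff {n : ℕ} (α : Fin n → ℕ) (g : EuclideanSpace ℝ (Fin n) → ℂ) :
    EuclideanSpace ℝ (Fin n) → ℂ :=
  (List.finRange n).foldr (fun i h => (dirD i)^[α i] h) g

/-- A tempered distribution `T` on `ℝ^n` has order `≤ (a, b)` if
`|T ξ| ≤ C · sup_{|α| ≤ a, |β| ≤ b} sup_x |x^β ∂^α ξ(x)|` for all Schwartz `ξ`. -/
def HasOrder {n : ℕ} (T : (EuclideanSpace ℝ (Fin n) → ℂ) →ₗ[ℂ] ℂ) (a b : ℕ) : Prop :=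
  ∃ C > (0 : ℝ), ∀ ξ : SchwartzMap (EuclideanSpace ℝ (Fin n)) ℂ, ∀ M : ℝ,
    (∀ (α β : Fin n → ℕ) (x : EuclideanSpace ℝ (Fin n)),
      (∑ i, α i) ≤ a → (∑ i, β i) ≤ b →
      |∏ i, (x i) ^ (β i)| * ‖mulDiff α (⇑ξ) x‖ ≤ M) →
    ‖T ⇑ξ‖ ≤ C * M

/-!
Near `0` the function `z ^ (a + 1)` agrees, for every `δ > 0`, with a globally defined `G` whose
derivatives of order at most `a` are all bounded by `δ`. Composing with `p`, the Schwartz function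
`p ^ (a + 1) * ξ` differs from `(G ∘ p) * ξ` by a function supported in the open set `{p ≠ 0}`.
A functional of finite order that kills the compactly supported functions there also kills this
difference, by cutting off at infinity, whereas its value on `(G ∘ p) * ξ` is `O(δ)` because it
sees only `a` derivatives. Hence its value on `p ^ (a + 1) * ξ` is `0`.
-/

open Finset Filter Topology SchwartzMap
open scoped ContDiff

variable {E F V W R 𝕜 : Type*} [NormedAddCommGroup E] [NormedSpace ℝ E]
  [NormedAddCommGroup F] [NormedSpace ℝ F] [NormedAddCommGroup V] [NormedSpace ℝ V]

section Bounds

theorem hasTemperateGrowth_mvPolynomial_eval [NormedCommRing R] [NormedAlgebra ℝ R] {σ : Type*}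
    {f : σ → E → R} (hf : ∀ i, (f i).HasTemperateGrowth) (h : MvPolynomial σ R) :
    (fun x => MvPolynomial.eval (fun i => f i x) h).HasTemperateGrowth := by
  induction h using MvPolynomial.induction_on with
  | C c => simpa only [MvPolynomial.eval_C] using .const c
  | add p q hp hq => simpa only [map_add] using! hp.add hq
  | mul_X p i hp => simpa only [map_mul, MvPolynomial.eval_X] using! hp.mul (hf i)

theorem exists_norm_iteratedFDeriv_le_of_hasCompactSupport {g : E → F} {a : ℕ}
    (hg : ContDiff ℝ a g) (hc : HasCompactSupport g) :
    ∃ B : ℝ, ∀ j ≤ a, ∀ x, ‖iteratedFDeriv ℝ j g x‖ ≤ B := by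
  have hbdd : ∀ j ≤ a, ∃ B : ℝ, ∀ x, ‖iteratedFDeriv ℝ j g x‖ ≤ B := fun j hj =>
    (hg.continuous_iteratedFDeriv (mod_cast hj)).bounded_above_of_compact_support
      (hc.iteratedFDeriv j)
  choose! B hB using hbdd
  obtain ⟨M, hM⟩ := ((range (a + 1)).image B).exists_le
  exact ⟨M, fun j hj x =>
    (hB j hj x).trans (hM _ (mem_image_of_mem B (mem_range.mpr (Nat.lt_succ_of_le hj))))⟩

theorem norm_iteratedFDeriv_comp_const_smul {g : E → F} {j : ℕ} (hg : ContDiff ℝ j g) (c : ℝ)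
    (x : E) : ‖iteratedFDeriv ℝ j (fun z => g (c • z)) x‖ =
      |c| ^ j * ‖iteratedFDeriv ℝ j g (c • x)‖ := by
  rw [iteratedFDeriv_comp_const_smul c hg, norm_smul, norm_pow, Real.norm_eq_abs]

theorem exists_norm_iteratedFDeriv_comp_le {p : E → V} (hp : p.HasTemperateGrowth) (a : ℕ) :
    ∃ (N : ℕ) (K : ℝ), 0 < K ∧ ∀ (G : V → F) (δ : ℝ), ContDiff ℝ a G →
      (∀ j ≤ a, ∀ y, ‖iteratedFDeriv ℝ j G y‖ ≤ δ) →
      ∀ j ≤ a, ∀ x, ‖iteratedFDeriv ℝ j (G ∘ p) x‖ ≤ K * δ * (1 + ‖x‖) ^ N := by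
  obtain ⟨l, C, hC, hpC⟩ := hp.norm_iteratedFDeriv_le_uniform a
  refine ⟨l * a, a.factorial * (C + 1) ^ a, by positivity, fun G δ hG hGδ j hj x => ?_⟩
  have hδ : 0 ≤ δ := (norm_nonneg _).trans (hGδ 0 a.zero_le 0)
  have hx : 1 ≤ (1 + ‖x‖) ^ l := one_le_pow₀ (by simp)
  have hD : 1 ≤ (C + 1) * (1 + ‖x‖) ^ l := one_le_mul_of_one_le_of_one_le (by simpa) hx
  have hpD : ∀ i, 1 ≤ i → i ≤ j →
      ‖iteratedFDeriv ℝ i p x‖ ≤ ((C + 1) * (1 + ‖x‖) ^ l) ^ i := fun i hi hij =>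
    calc ‖iteratedFDeriv ℝ i p x‖ ≤ C * (1 + ‖x‖) ^ l := hpC i (hij.trans hj) x
      _ ≤ (C + 1) * (1 + ‖x‖) ^ l := by gcongr; simp
      _ ≤ _ := le_self_pow₀ hD (by omega)
  calc ‖iteratedFDeriv ℝ j (G ∘ p) x‖ ≤ j.factorial * δ * ((C + 1) * (1 + ‖x‖) ^ l) ^ j :=
        norm_iteratedFDeriv_comp_le hG (hp.1.of_le (mod_cast le_top)) (mod_cast hj) x
          (fun i hi => hGδ i (hi.trans hj) _) hpD
    _ ≤ a.factorial * δ * ((C + 1) * (1 + ‖x‖) ^ l) ^ a := by gcongr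
    _ = a.factorial * (C + 1) ^ a * δ * (1 + ‖x‖) ^ (l * a) := by rw [mul_pow, pow_mul]; ring

end Bounds

section Cutoffs

theorem exists_hasCompactSupport_norm_iteratedFDeriv_one_sub_le [FiniteDimensional ℝ E] (a : ℕ)
    {δ : ℝ} (hδ : 0 < δ) :
    ∃ χ : E → ℝ, ContDiff ℝ ∞ χ ∧ HasCompactSupport χ ∧
      ∀ j ≤ a, ∀ x, ‖iteratedFDeriv ℝ j (1 - χ) x‖ ≤ δ * (1 + ‖x‖) := by
  let f : ContDiffBump (0 : E) := default
  obtain ⟨B, hB⟩ :=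
    exists_norm_iteratedFDeriv_le_of_hasCompactSupport (a := a) f.contDiff f.hasCompactSupport
  obtain ⟨c, hc0, hc1, hcδ⟩ : ∃ c : ℝ, 0 < c ∧ c ≤ 1 ∧ c * max 1 B ≤ δ := by
    refine ⟨min 1 (δ / max 1 B), by positivity, min_le_left _ _, ?_⟩
    exact (le_div_iff₀ (by positivity)).mp (min_le_right _ _)
  have hfc : ContDiff ℝ ∞ fun x => f (c • x) := f.contDiff.comp (contDiff_const_smul c)
  refine ⟨fun x => f (c • x), hfc, f.hasCompactSupport.comp_smul hc0.ne', fun j hj x => ?_⟩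
  rcases j.eq_zero_or_pos with rfl | hj0
  · have hfx : |1 - f (c • x)| ≤ ‖c • x‖ := by
      rw [abs_of_nonneg (sub_nonneg.mpr f.le_one)]
      rcases le_or_gt ‖c • x‖ 1 with hx | hx
      · rw [f.one_of_mem_closedBall (mem_closedBall_zero_iff.mpr hx), sub_self]
        exact norm_nonneg _
      · linarith [f.nonneg (x := c • x)]
    calc ‖iteratedFDeriv ℝ 0 (1 - fun x => f (c • x)) x‖ = |1 - f (c • x)| := by simp
      _ ≤ ‖c • x‖ := hfx
      _ = c * 1 * ‖x‖ := by rw [norm_smul, Real.norm_of_nonneg hc0.le, mul_one]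
      _ ≤ c * max 1 B * (1 + ‖x‖) := by gcongr <;> simp
      _ ≤ δ * (1 + ‖x‖) := by gcongr
  · have hconst : iteratedFDeriv ℝ j (1 - fun x => f (c • x)) x =
        -iteratedFDeriv ℝ j (fun x => f (c • x)) x := by
      rw [Pi.one_def, iteratedFDeriv_sub_apply contDiffAt_const
        (hfc.contDiffAt.of_le (mod_cast le_top)), iteratedFDeriv_const_of_ne hj0.ne',
        Pi.zero_apply, zero_sub]
    calc ‖iteratedFDeriv ℝ j (1 - fun x => f (c • x)) x‖
        = c ^ j * ‖iteratedFDeriv ℝ j f (c • x)‖ := by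
          rw [hconst, norm_neg, norm_iteratedFDeriv_comp_const_smul f.contDiff, abs_of_pos hc0]
      _ ≤ c * max 1 B := by
          gcongr
          · exact pow_le_of_le_one hc0.le hc1 hj0.ne'
          · exact (hB j hj _).trans (le_max_right _ _)
      _ ≤ δ * (1 + ‖x‖) := hcδ.trans (le_mul_of_one_le_right hδ.le (by simp))

-- Rescaling a cutoff `g` of `z ^ (a + 1)` to `c ^ (-(a + 1)) * g (c * z)` gains a factor
-- `c ^ (j - a - 1) ≤ c⁻¹` in the derivatives of order `j ≤ a`.
theorem exists_eventuallyEq_pow_norm_iteratedFDeriv_le [NormedRing R] [NormedAlgebra ℝ R]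
    [FiniteDimensional ℝ R] (a : ℕ) {δ : ℝ} (hδ : 0 < δ) :
    ∃ G : R → R, G.HasTemperateGrowth ∧ G =ᶠ[𝓝 0] (fun z => z ^ (a + 1)) ∧
      ∀ j ≤ a, ∀ z, ‖iteratedFDeriv ℝ j G z‖ ≤ δ := by
  let f : ContDiffBump (0 : R) := default
  let g : R → R := fun z => f z • z ^ (a + 1)
  have hg : ContDiff ℝ ∞ g := f.contDiff.smul (contDiff_id.pow _)
  have hgc : HasCompactSupport g := f.hasCompactSupport.smul_right
  obtain ⟨B, hB⟩ :=
    exists_norm_iteratedFDeriv_le_of_hasCompactSupport (a := a) (hg.of_le (mod_cast le_top)) hgc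
  obtain ⟨c, hc1, hcB⟩ : ∃ c : ℝ, 1 ≤ c ∧ c⁻¹ * B ≤ δ := by
    refine ⟨max 1 (B / δ), le_max_left _ _, ?_⟩
    rw [inv_mul_le_iff₀ (by positivity), ← div_le_iff₀ hδ]
    exact le_max_right _ _
  have hc0 : 0 < c := by positivity
  have hgs : ContDiff ℝ ∞ fun z => g (c • z) := hg.comp (contDiff_const_smul c)
  have hGc : HasCompactSupport (c⁻¹ ^ (a + 1) • fun z => g (c • z)) :=
    (hgc.comp_smul hc0.ne').smul_left (f := fun _ => c⁻¹ ^ (a + 1))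
  have hGs : ContDiff ℝ ∞ (c⁻¹ ^ (a + 1) • fun z => g (c • z)) := contDiff_const.smul hgs
  refine ⟨_, hGc.hasTemperateGrowth hGs, ?_, fun j hj z => ?_⟩
  · have hlim : Tendsto (fun z : R => c • z) (𝓝 0) (𝓝 0) :=
      (continuous_const_smul c).tendsto' 0 0 (smul_zero c)
    filter_upwards [hlim.eventually f.eventuallyEq_one] with z hz
    simp only [Pi.smul_apply, g, hz, Pi.one_apply, smul_pow, smul_smul]
    rw [one_mul, ← mul_pow, inv_mul_cancel₀ hc0.ne', one_pow, one_smul]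
  · have hpow : c⁻¹ ^ (a + 1) * c ^ j ≤ c⁻¹ :=
      calc c⁻¹ ^ (a + 1) * c ^ j ≤ c⁻¹ ^ (a + 1) * c ^ a := by gcongr
        _ = c⁻¹ := by
          rw [pow_succ', mul_assoc, ← mul_pow, inv_mul_cancel₀ hc0.ne', one_pow, mul_one]
    calc ‖iteratedFDeriv ℝ j (c⁻¹ ^ (a + 1) • fun z => g (c • z)) z‖
        = c⁻¹ ^ (a + 1) * c ^ j * ‖iteratedFDeriv ℝ j g (c • z)‖ := by
          rw [iteratedFDeriv_const_smul_apply (hgs.contDiffAt.of_le (mod_cast le_top)), norm_smul,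
            norm_iteratedFDeriv_comp_const_smul (hg.of_le (mod_cast le_top)), abs_of_pos hc0,
            Real.norm_of_nonneg (by positivity), mul_assoc]
      _ ≤ c⁻¹ * B := by gcongr; exact hB j hj _
      _ ≤ δ := hcB

end Cutoffs

section SchwartzOrder

variable [NontriviallyNormedField 𝕜] [NormedAlgebra ℝ 𝕜] [NormedSpace 𝕜 F] [NormedAddCommGroup W]

/-- A functional on Schwartz space has order `≤ (k, a)` if it is bounded by the seminorm
`max_{k' ≤ k, j ≤ a} sup_x ‖x‖ ^ k' * ‖D^j ξ x‖`. This is the coordinate-free counterpart of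
`HasOrder`, with the order of differentiation `a` in second place as in
`schwartzSeminormFamily`. -/
def HasSchwartzOrder (T : 𝓢(E, F) →+ W) (k a : ℕ) : Prop :=
  ∃ C : ℝ, 0 ≤ C ∧
    ∀ ξ, ‖T ξ‖ ≤ C * ((Iic (k, a)).sup (schwartzSeminormFamily ℝ E F)) ξ

theorem sup_schwartzSeminormFamily_smulLeftCLM_le {g : E → 𝕜} (hg : g.HasTemperateGrowth)
    {k a N : ℕ} {δ : ℝ} (hgδ : ∀ j ≤ a, ∀ x, ‖iteratedFDeriv ℝ j g x‖ ≤ δ * (1 + ‖x‖) ^ N)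
    (ξ : 𝓢(E, F)) :
    (Iic (k, a)).sup (schwartzSeminormFamily ℝ E F) (smulLeftCLM F g ξ) ≤
      2 ^ (a + (k + N)) * δ * (Iic (k + N, a)).sup (schwartzSeminormFamily ℝ E F) ξ := by
  set q := (Iic (k + N, a)).sup (schwartzSeminormFamily ℝ E F) ξ
  have : 0 ≤ q := apply_nonneg _ _
  have hδ : 0 ≤ δ := by simpa using (norm_nonneg _).trans (hgδ 0 a.zero_le 0)
  refine Seminorm.finset_sup_apply_le (by positivity) fun ⟨k', m⟩ hkm => ?_
  obtain ⟨hk, hm⟩ : k' ≤ k ∧ m ≤ a := by simpa using hkm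
  refine SchwartzMap.seminorm_le_bound ℝ k' m _ (by positivity) fun x => ?_
  have hterm : ∀ i ∈ range (m + 1), ‖x‖ ^ k' *
      (m.choose i * ‖iteratedFDeriv ℝ i g x‖ * ‖iteratedFDeriv ℝ (m - i) ξ x‖) ≤
        m.choose i * (2 ^ (k + N) * δ * q) := fun i hi => by
    have hia : i ≤ a := (mem_range_succ_iff.mp hi).trans hm
    have hξ : (1 + ‖x‖) ^ (k + N) * ‖iteratedFDeriv ℝ (m - i) ξ x‖ ≤ 2 ^ (k + N) * q :=
      one_add_le_sup_seminorm_apply (m := (k + N, a)) le_rfl ((Nat.sub_le m i).trans hm) ξ x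
    have hx : ‖x‖ ^ k' ≤ (1 + ‖x‖) ^ k :=
      (pow_le_pow_left₀ (norm_nonneg x) (by simp) k').trans (pow_le_pow_right₀ (by simp) hk)
    calc _ ≤ (1 + ‖x‖) ^ k * (m.choose i * (δ * (1 + ‖x‖) ^ N) *
            ‖iteratedFDeriv ℝ (m - i) ξ x‖) := by gcongr; exact hgδ i hia x
      _ = m.choose i * δ * ((1 + ‖x‖) ^ (k + N) * ‖iteratedFDeriv ℝ (m - i) ξ x‖) := by ring
      _ ≤ m.choose i * δ * (2 ^ (k + N) * q) := by gcongr
      _ = m.choose i * (2 ^ (k + N) * δ * q) := by ring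
  rw [smulLeftCLM_apply hg]
  calc _ ≤ ‖x‖ ^ k' * ∑ i ∈ range (m + 1),
          m.choose i * ‖iteratedFDeriv ℝ i g x‖ * ‖iteratedFDeriv ℝ (m - i) ξ x‖ := by
        gcongr
        exact norm_iteratedFDeriv_smul_le hg.1 (ξ.smooth ⊤) x (mod_cast le_top)
    _ ≤ ∑ i ∈ range (m + 1), m.choose i * (2 ^ (k + N) * δ * q) := by
        rw [mul_sum]
        exact sum_le_sum hterm
    _ = 2 ^ m * (2 ^ (k + N) * δ * q) := by
        rw [← sum_mul, ← Nat.cast_sum, Nat.sum_range_choose, Nat.cast_pow, Nat.cast_ofNat]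
    _ ≤ 2 ^ a * (2 ^ (k + N) * δ * q) := by gcongr; norm_num
    _ = 2 ^ (a + (k + N)) * δ * q := by rw [pow_add]; ring

variable {T : 𝓢(E, F) →+ W} {k a : ℕ}

theorem HasSchwartzOrder.eq_zero_of_forall_exists_smulLeftCLM (hT : HasSchwartzOrder T k a)
    (ξ : 𝓢(E, F)) (N : ℕ) {w : W}
    (hw : ∀ δ > 0, ∃ g : E → 𝕜, g.HasTemperateGrowth ∧
      (∀ j ≤ a, ∀ x, ‖iteratedFDeriv ℝ j g x‖ ≤ δ * (1 + ‖x‖) ^ N) ∧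
      T (smulLeftCLM F g ξ) = w) :
    w = 0 := by
  obtain ⟨C, hC, hTC⟩ := hT
  set K := C * (2 ^ (a + (k + N)) * (Iic (k + N, a)).sup (schwartzSeminormFamily ℝ E F) ξ)
    with hK
  have hK0 : 0 ≤ K := mul_nonneg hC (mul_nonneg (by positivity) (apply_nonneg _ _))
  have hwδ : ∀ δ > 0, ‖w‖ ≤ K * δ := fun δ hδ => by
    obtain ⟨g, hg, hgδ, rfl⟩ := hw δ hδ
    calc _ ≤ _ := hTC _
      _ ≤ _ := mul_le_mul_of_nonneg_left (sup_schwartzSeminormFamily_smulLeftCLM_le hg hgδ ξ) hC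
      _ = K * δ := by rw [hK]; ring
  refine norm_le_zero_iff.mp (le_of_forall_pos_le_add fun ε hε => ?_)
  calc ‖w‖ ≤ K * (ε / (K + 1)) := hwδ _ (by positivity)
    _ ≤ (K + 1) * (ε / (K + 1)) := by gcongr; simp
    _ = 0 + ε := by field_simp; ring

theorem HasSchwartzOrder.isVanishingOn_of_hasCompactSupport [FiniteDimensional ℝ E]
    (hT : HasSchwartzOrder T k a) {U : Set E}
    (hU : ∀ φ : 𝓢(E, F), HasCompactSupport φ → tsupport φ ⊆ U → T φ = 0) :
    Distribution.IsVanishingOn T U := by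
  intro η hη
  refine hT.eq_zero_of_forall_exists_smulLeftCLM (𝕜 := ℝ) η 1 fun δ hδ => ?_
  obtain ⟨χ, hχ, hχc, hχδ⟩ :=
    exists_hasCompactSupport_norm_iteratedFDeriv_one_sub_le (E := E) a hδ
  have hχt : χ.HasTemperateGrowth := hχc.hasTemperateGrowth hχ
  have h1t : (1 : E → ℝ).HasTemperateGrowth := .const 1
  have hχη : T (smulLeftCLM F χ η) = 0 := by
    have hsupp := tsupport_smulLeftCLM_subset χ η
    exact hU _ (hχc.of_isClosed_subset (isClosed_tsupport _) (hsupp.trans Set.inter_subset_right))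
      ((hsupp.trans Set.inter_subset_left).trans hη)
  have hsplit : smulLeftCLM F (1 - χ) η = η - smulLeftCLM F χ η := by
    ext x
    simp [smulLeftCLM_apply_apply (h1t.sub hχt), smulLeftCLM_apply_apply hχt, sub_smul]
  refine ⟨1 - χ, h1t.sub hχt, by simpa only [pow_one] using hχδ, ?_⟩
  rw [hsplit, map_sub, hχη, sub_zero]

theorem stmt16_general [FiniteDimensional ℝ E] [FiniteDimensional ℝ 𝕜]
    (hT : HasSchwartzOrder T k a) {p : E → 𝕜} (hp : p.HasTemperateGrowth)
    (hvanish : ∀ φ : 𝓢(E, F), HasCompactSupport φ → tsupport φ ⊆ {x | p x ≠ 0} → T φ = 0)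
    (ξ : 𝓢(E, F)) : T (smulLeftCLM F (p ^ (a + 1)) ξ) = 0 := by
  obtain ⟨N, K, hK, hcomp⟩ := exists_norm_iteratedFDeriv_comp_le (F := 𝕜) hp a
  refine hT.eq_zero_of_forall_exists_smulLeftCLM (𝕜 := 𝕜) ξ N fun δ hδ => ?_
  obtain ⟨G, hG, hGpow, hGδ⟩ :=
    exists_eventuallyEq_pow_norm_iteratedFDeriv_le (R := 𝕜) a (div_pos hδ hK)
  have hGp : (G ∘ p).HasTemperateGrowth := hG.comp hp
  refine ⟨G ∘ p, hGp, fun j hj x => ?_, ?_⟩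
  · simpa [mul_div_cancel₀ _ hK.ne'] using hcomp G _ (hG.1.of_le (mod_cast le_top)) hGδ j hj x
  have hsupp : tsupport (G ∘ p - p ^ (a + 1)) ⊆ {x | p x ≠ 0} := fun x hx hpx => by
    refine notMem_tsupport_iff_eventuallyEq.mpr ?_ hx
    have hlim : Tendsto p (𝓝 x) (𝓝 0) := hp.1.continuous.tendsto' x 0 hpx
    filter_upwards [hlim.eventually hGpow] with y hy
    simp [hy]
  have hdiff : T (smulLeftCLM F (G ∘ p - p ^ (a + 1)) ξ) = 0 :=
    hT.isVanishingOn_of_hasCompactSupport hvanish _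
      ((tsupport_smulLeftCLM_subset _ ξ).trans (Set.inter_subset_right.trans hsupp))
  rwa [smulLeftCLM_sub hGp (hp.pow _), sub_apply, map_sub, sub_eq_zero] at hdiff

end SchwartzOrder

section MultiIndex

variable {n : ℕ} {g : EuclideanSpace ℝ (Fin n) → ℂ}

theorem contDiff_dirD (i : Fin n) (hg : ContDiff ℝ ∞ g) : ContDiff ℝ ∞ (dirD i g) :=
  (hg.fderiv_right (by simp)).clm_apply contDiff_const

theorem norm_iteratedFDeriv_dirD_le (i : Fin n) (hg : ContDiff ℝ ∞ g) (m : ℕ)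
    (x : EuclideanSpace ℝ (Fin n)) :
    ‖iteratedFDeriv ℝ m (dirD i g) x‖ ≤ ‖iteratedFDeriv ℝ (m + 1) g x‖ := by
  have hg' : ContDiff ℝ ∞ (fderiv ℝ g) := hg.fderiv_right (by simp)
  simpa [dirD, norm_iteratedFDeriv_fderiv] using! norm_iteratedFDeriv_clm_apply_const
    (c := EuclideanSpace.single i (1 : ℝ)) (n := m) hg'.contDiffAt (mod_cast le_top)

theorem contDiff_dirD_iterate (i : Fin n) (hg : ContDiff ℝ ∞ g) (r : ℕ) :
    ContDiff ℝ ∞ ((dirD i)^[r] g) :=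
  Function.Iterate.rec _ hg (fun _ => contDiff_dirD i) r

theorem norm_iteratedFDeriv_dirD_iterate_le (i : Fin n) (hg : ContDiff ℝ ∞ g) (r m : ℕ)
    (x : EuclideanSpace ℝ (Fin n)) :
    ‖iteratedFDeriv ℝ m ((dirD i)^[r] g) x‖ ≤ ‖iteratedFDeriv ℝ (m + r) g x‖ := by
  induction r generalizing m with
  | zero => rfl
  | succ r ih =>
    rw [Function.iterate_succ_apply']
    calc _ ≤ ‖iteratedFDeriv ℝ (m + 1) ((dirD i)^[r] g) x‖ :=
          norm_iteratedFDeriv_dirD_le i (contDiff_dirD_iterate i hg r) m x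
      _ ≤ ‖iteratedFDeriv ℝ (m + 1 + r) g x‖ := ih (m + 1)
      _ = _ := by rw [add_assoc, add_comm 1 r]

theorem norm_mulDiff_le (α : Fin n → ℕ) (hg : ContDiff ℝ ∞ g) (x : EuclideanSpace ℝ (Fin n)) :
    ‖mulDiff α g x‖ ≤ ‖iteratedFDeriv ℝ (∑ i, α i) g x‖ := by
  have hfoldr : ∀ l : List (Fin n),
      ContDiff ℝ ∞ (l.foldr (fun i h => (dirD i)^[α i] h) g) ∧
      ∀ m, ‖iteratedFDeriv ℝ m (l.foldr (fun i h => (dirD i)^[α i] h) g) x‖ ≤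
        ‖iteratedFDeriv ℝ (m + (l.map α).sum) g x‖ := by
    intro l
    induction l with
    | nil => exact ⟨hg, fun m => le_rfl⟩
    | cons i l ih =>
      refine ⟨contDiff_dirD_iterate i ih.1 _, fun m => ?_⟩
      rw [List.map_cons, List.sum_cons, ← add_assoc]
      exact (norm_iteratedFDeriv_dirD_iterate_le i ih.1 _ m x).trans (ih.2 _)
  have hfoldr0 := (hfoldr (List.finRange n)).2 0
  rwa [zero_add, ← Fin.sum_univ_def, norm_iteratedFDeriv_zero] at hfoldr0

theorem abs_prod_pow_le_one_add_norm_pow (β : Fin n → ℕ) (x : EuclideanSpace ℝ (Fin n)) :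
    |∏ i, x i ^ β i| ≤ (1 + ‖x‖) ^ ∑ i, β i := by
  rw [abs_prod, ← prod_pow_eq_pow_sum]
  refine prod_le_prod (fun _ _ => abs_nonneg _) fun i _ => ?_
  rw [abs_pow, ← Real.norm_eq_abs]
  gcongr
  exact (PiLp.norm_apply_le x i).trans (by simp)

theorem HasOrder.hasSchwartzOrder {T : (EuclideanSpace ℝ (Fin n) → ℂ) →ₗ[ℂ] ℂ} {a b : ℕ}
    (hT : HasOrder T a b) :
    HasSchwartzOrder (T.toAddMonoidHom.comp (FunLike.coeAddMonoidHom
      𝓢(EuclideanSpace ℝ (Fin n), ℂ) (EuclideanSpace ℝ (Fin n)) ℂ)) b a := by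
  obtain ⟨C, hC, hTC⟩ := hT
  refine ⟨C * 2 ^ b, by positivity, fun ξ => ?_⟩
  rw [mul_assoc]
  refine hTC ξ _ fun α β x hα hβ => ?_
  calc |∏ i, x i ^ β i| * ‖mulDiff α ξ x‖
      ≤ (1 + ‖x‖) ^ (∑ i, β i) * ‖iteratedFDeriv ℝ (∑ i, α i) ξ x‖ := by
        gcongr
        · exact abs_prod_pow_le_one_add_norm_pow β x
        · exact norm_mulDiff_le α (ξ.smooth ⊤) x
    _ ≤ _ := one_add_le_sup_seminorm_apply (m := (b, a)) hβ hα ξ x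

end MultiIndex

/-- A tempered distribution of finite order that vanishes on all smooth compactly
supported functions supported in `X⁺ = ℝ^n ∖ {h = 0}` is annihilated by multiplication by
a sufficiently high power of the polynomial `h`: there is `M ∈ ℤ_{≥0}` with `T(h^M ξ) = 0`
for every Schwartz `ξ`. -/
theorem stmt16 {n : ℕ} (h : MvPolynomial (Fin n) ℝ)
    (T : (EuclideanSpace ℝ (Fin n) → ℂ) →ₗ[ℂ] ℂ)
    (a b : ℕ) (horder : HasOrder T a b)
    (hvanish : ∀ φ : EuclideanSpace ℝ (Fin n) → ℂ,
      ContDiff ℝ (⊤ : ℕ∞) φ → HasCompactSupport φ →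
      tsupport φ ⊆ {x | MvPolynomial.eval (fun i => x i) h ≠ 0} → T φ = 0) :
    ∃ M : ℕ, ∀ ξ : SchwartzMap (EuclideanSpace ℝ (Fin n)) ℂ,
      T (fun x => ((MvPolynomial.eval (fun i => x i) h : ℝ) : ℂ) ^ M * ξ x) = 0 := by
  refine ⟨a + 1, fun ξ => ?_⟩
  have hcoord (i : Fin n) : (fun x : EuclideanSpace ℝ (Fin n) => x i).HasTemperateGrowth :=
    (EuclideanSpace.proj (𝕜 := ℝ) i).hasTemperateGrowth
  have hp := hasTemperateGrowth_mvPolynomial_eval hcoord h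
  simpa [smulLeftCLM_apply (hp.pow (a + 1))] using!
    stmt16_general horder.hasSchwartzOrder hp (fun φ => hvanish φ (φ.smooth ⊤)) ξ
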